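/- Fix α ∈ (0,1). For every ε > 0 there exists N such that for all n ≥ N, the 2-dimension of the divisibility poset on the set of integers in (n^α, n] satisfies ((1−α)²/16 − ε)·(log n)²/(log log n)² ≤ dim₂(D_{(n^α, n]}) ≤ ((4/3)·e·π² + ε)·(log n)²/(log log n). -/

import Mathlib

/-- The 2-dimension of the divisibility poset on a set `S ⊆ ℕ`:
the least `d` such that there is an order embedding of `(S, ∣)` into the
powerset of `{1, …, d}` ordered by inclusion. -/
noncomputable def divDim2 (S : Set ℕ) : ℕ :=
  sInf {d : ℕ | ∃ f : ℕ → Finset (Fin d), ∀ a ∈ S, ∀ b ∈ S, (f a ⊆ f b ↔ a ∣ b)}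

/-!
Prime factorisation makes prime powers the natural test objects: `a ∣ b` fails exactly when some
prime power divides `a` but not `b`.

For the upper bound, a coordinate is a set `G` of prime powers, and `a` is sent to the coordinates
that contain one of its divisors. An integer `b ≤ n` has at most `K = log n / log P` prime power
divisors whose prime is at least `P`. A uniform colouring of these prime powers with `2 K + 1`
colours therefore separates a given `q ∤ b` from all of those divisors with probability at least
`1 / 2`, so by a union bound over the pairs `(q, b)` some `O(log n)` colourings separate all pairs,
and their colour classes serve as coordinates. Powers of primes below `P` are used as singletons.
Taking `P = (log n) ^ θ` with `θ < 1` close to `1` gives `O((log n)² / log log n)` coordinates.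

For the lower bound, let `M` be just above `n ^ α`. If a product of `k` primes up to `x` never
exceeds `n / M`, the images of the numbers `M * p`, for `p ≤ x` prime, form a `k`-cover-free family:
the image of `M * ∏ q ∈ B, q` contains the union of the images of the `M * q`, `q ∈ B`. By the
argument of Erdős, Frankl and Füredi such a family with more than `d + k` members on `d` points
forces `(k + 1) (k + 2) ≤ 2 d`. With `x = (log n)²` this applies to
`k ≈ (1 - α) log n / (2 log log n)`.
-/

open Filter Finset Topology

section CoverFree

variable {ι β : Type*}

/-- The Erdős–Frankl–Füredi notion of a `k`-cover-free family: no member of `(F p)_{p ∈ R}` is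
contained in the union of at most `k` others. -/
def IsCoverFree [DecidableEq β] (F : ι → Finset β) (R : Finset ι) (k : ℕ) : Prop :=
  ∀ p ∈ R, ∀ B ⊆ R, #B ≤ k → p ∉ B → ¬ F p ⊆ B.biUnion F

/-- The set `F p` has a private point in the family `(F q)_{q ∈ R}`: a point that lies in no other
member. -/
def HasPrivatePoint (F : ι → Finset β) (R : Finset ι) (p : ι) : Prop :=
  ∃ i ∈ F p, ∀ q ∈ R, q ≠ p → i ∉ F q

open Classical in
lemma card_hasPrivatePoint_le [Fintype β] (F : ι → Finset β) (R : Finset ι) :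
    #{p ∈ R | HasPrivatePoint F R p} ≤ Fintype.card β := by
  have hprivate : ∀ p : {p ∈ R | HasPrivatePoint F R p}, HasPrivatePoint F R p :=
    fun p ↦ (mem_filter.1 p.2).2
  choose g hgmem hgprivate using hprivate
  rw [← Fintype.card_coe]
  refine Fintype.card_le_of_injective g fun p q hpq ↦ ?_
  by_contra hne
  exact hgprivate p q (mem_filter.1 q.2).1 (fun h ↦ hne (Subtype.ext h.symm)) (hpq ▸ hgmem q)

namespace IsCoverFree

variable [DecidableEq β] {F : ι → Finset β} {R : Finset ι} {k : ℕ}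

/- If `F p` had at most `k - #C` points outside the union over `C`, then, none of them being
private, `C` and one further set for each of them would cover `F p`. -/
lemma lt_card_sdiff_biUnion_add_card (h : IsCoverFree F R k) {p : ι} (hp : p ∈ R)
    (hprivate : ¬ HasPrivatePoint F R p) {C : Finset ι} (hCR : C ⊆ R) (hpC : p ∉ C) :
    k < #(F p \ C.biUnion F) + #C := by
  classical
  by_contra! hle
  have hother : ∀ i ∈ F p, ∃ q ∈ R, q ≠ p ∧ i ∈ F q := by
    simpa [HasPrivatePoint] using hprivate
  have : Nonempty ι := ⟨p⟩
  choose! g hgR hgne hgmem using hother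
  have hnew : ∀ q ∈ (F p \ C.biUnion F).image g, q ∈ R ∧ q ≠ p := forall_mem_image.2 fun i hi ↦
    ⟨hgR i (mem_sdiff.1 hi).1, hgne i (mem_sdiff.1 hi).1⟩
  refine h p hp (C ∪ (F p \ C.biUnion F).image g)
    (union_subset hCR fun q hq ↦ (hnew q hq).1) ?_ ?_ fun i hi ↦ ?_
  · grw [card_union_le, card_image_le]
    lia
  · simpa [hpC] using fun i hi _ hgi ↦ hgne i hi hgi
  · by_cases hiC : i ∈ C.biUnion F
    · exact biUnion_subset_biUnion_of_subset_left F subset_union_left hiC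
    · exact mem_biUnion.2 ⟨g i, mem_union_right _ (mem_image_of_mem g (mem_sdiff.2 ⟨hi, hiC⟩)),
        hgmem i hi⟩

/- The bound is `#(C.biUnion F) ≥ (k + 1) + k + ⋯ + (k + 2 - #C)`, with the subtractions cleared. -/
lemma card_mul_le_two_mul_card_biUnion (h : IsCoverFree F R k) {C : Finset ι} (hCR : C ⊆ R)
    (hprivate : ∀ p ∈ C, ¬ HasPrivatePoint F R p) :
    #C * (2 * k + 3) ≤ 2 * #(C.biUnion F) + #C * #C := by
  classical
  induction C using Finset.induction_on with
  | empty => simp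
  | insert p C hpC ih =>
    rw [insert_subset_iff] at hCR
    rw [forall_mem_insert] at hprivate
    have hC := ih hCR.2 hprivate.2
    have hgrow := h.lt_card_sdiff_biUnion_add_card hCR.1 hprivate.1 hCR.2 hpC
    rw [biUnion_insert, ← card_sdiff_add_card, card_insert_of_notMem hpC]
    nlinarith

theorem card_le_add_or_succ_mul_le [Fintype β] (h : IsCoverFree F R k) :
    #R ≤ Fintype.card β + k ∨ (k + 1) * (k + 2) ≤ 2 * Fintype.card β := by
  classical
  rcases le_or_gt #{p ∈ R | ¬ HasPrivatePoint F R p} k with hle | hlt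
  · left
    rw [← card_filter_add_card_filter_not (s := R) (HasPrivatePoint F R)]
    exact add_le_add (card_hasPrivatePoint_le F R) hle
  · right
    obtain ⟨C, hC, hCk⟩ := exists_subset_card_eq (Nat.succ_le_of_lt hlt)
    have hbound := h.card_mul_le_two_mul_card_biUnion (hC.trans (filter_subset _ R))
      fun p hp ↦ (mem_filter.1 (hC hp)).2
    have hunion : #(C.biUnion F) ≤ Fintype.card β := card_le_univ _
    rw [hCk] at hbound
    lia

end IsCoverFree

end CoverFree

section Colorings

lemma card_colorings_eq_mul_card_le {V κ : Type*} [Fintype V] [DecidableEq V] [Fintype κ]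
    [DecidableEq κ] {x y : V} (hxy : y ≠ x) :
    #{c : V → κ | c y = c x} * Fintype.card κ ≤ Fintype.card (V → κ) := by
  rw [← card_univ (α := κ), ← card_product, ← card_univ]
  refine card_le_card_of_injOn (fun z ↦ Function.update z.1 x z.2) (by simp) ?_
  rintro ⟨c, j⟩ hc ⟨c', j'⟩ hc' h
  simp only [mem_coe, mem_product, mem_filter_univ, mem_univ, and_true] at hc hc'
  have hvalue (v : V) : Function.update c x j v = Function.update c' x j' v := congrFun h v
  have hoff : ∀ v ≠ x, c v = c' v := fun v hv ↦ by simpa [hv] using hvalue v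
  have hx : c x = c' x := by rw [← hc, ← hc', hoff y hxy]
  have hcc' : c = c' := funext fun v ↦ if hv : v = x then hv ▸ hx else hoff v hv
  exact Prod.ext hcc' (by simpa using hvalue x)

lemma exists_tuple_notMem_of_card_lt_two_pow {Ω ζ : Type*} [Fintype Ω] [Nonempty Ω]
    {X : Finset ζ} {bad : ζ → Finset Ω} (hbad : ∀ z ∈ X, 2 * #(bad z) ≤ Fintype.card Ω)
    {m : ℕ} (hm : #X < 2 ^ m) : ∃ ω : Fin m → Ω, ∀ z ∈ X, ∃ i, ω i ∉ bad z := by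
  classical
  by_contra! hall
  have hcover : (univ : Finset (Fin m → Ω)) ⊆ X.biUnion fun z ↦ Fintype.piFinset fun _ ↦ bad z := by
    simpa [subset_iff] using hall
  have hcard : Fintype.card Ω ^ m ≤ ∑ z ∈ X, #(bad z) ^ m := by
    simpa using (card_le_card hcover).trans card_biUnion_le
  have : 2 ^ m * Fintype.card Ω ^ m ≤ #X * Fintype.card Ω ^ m := by
    calc 2 ^ m * Fintype.card Ω ^ m ≤ ∑ z ∈ X, (2 * #(bad z)) ^ m := by
          simpa only [mul_pow, ← mul_sum] using Nat.mul_le_mul_left _ hcard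
      _ ≤ ∑ _z ∈ X, Fintype.card Ω ^ m := by gcongr with z hz; exact hbad z hz
      _ = #X * Fintype.card Ω ^ m := by simp
  exact hm.not_ge (le_of_mul_le_mul_right this (pow_pos Fintype.card_pos m))

lemma exists_colorings_separating {V ζ : Type*} [Finite V] {X : Finset ζ} {x : ζ → V}
    {B : ζ → Finset V} {K m : ℕ} (hxB : ∀ z ∈ X, x z ∉ B z) (hB : ∀ z ∈ X, #(B z) ≤ K)
    (hm : #X < 2 ^ m) :
    ∃ c : Fin m → V → Fin (2 * K + 1), ∀ z ∈ X, ∃ i, ∀ y ∈ B z, c i y ≠ c i (x z) := by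
  classical
  have := Fintype.ofFinite V
  let bad (z : ζ) : Finset (V → Fin (2 * K + 1)) := (B z).biUnion fun y ↦ {c | c y = c (x z)}
  have hbad : ∀ z ∈ X, 2 * #(bad z) ≤ Fintype.card (V → Fin (2 * K + 1)) := fun z hz ↦ by
    have hmul : #(bad z) * (2 * K + 1) ≤ K * Fintype.card (V → Fin (2 * K + 1)) := by
      calc #(bad z) * (2 * K + 1)
          ≤ ∑ y ∈ B z, #{c : V → Fin (2 * K + 1) | c y = c (x z)} * (2 * K + 1) := by
            rw [← sum_mul]
            gcongr
            exact card_biUnion_le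
        _ ≤ ∑ y ∈ B z, Fintype.card (V → Fin (2 * K + 1)) := sum_le_sum fun y hy ↦ by
            simpa only [Fintype.card_fin] using
              card_colorings_eq_mul_card_le (κ := Fin (2 * K + 1))
                (ne_of_mem_of_not_mem hy (hxB z hz))
        _ ≤ K * Fintype.card (V → Fin (2 * K + 1)) := by
            rw [sum_const, smul_eq_mul]
            exact Nat.mul_le_mul_right _ (hB z hz)
    nlinarith
  simpa [bad] using exists_tuple_notMem_of_card_lt_two_pow hbad hm

end Colorings

section Embeddings

/-- An order embedding of the divisibility poset on `S` into the finite subsets of `β`, given as a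
function on all of `ℕ` to match the encoding in `divDim2`. -/
def IsDivEmbedding {β : Type*} (S : Set ℕ) (f : ℕ → Finset β) : Prop :=
  ∀ a ∈ S, ∀ b ∈ S, (f a ⊆ f b ↔ a ∣ b)

variable {β : Type*} [Fintype β] {S : Set ℕ}

lemma IsDivEmbedding.exists_fin {f : ℕ → Finset β} (hf : IsDivEmbedding S f) :
    ∃ g : ℕ → Finset (Fin (Fintype.card β)), IsDivEmbedding S g :=
  ⟨fun a ↦ (f a).map (Fintype.equivFin β).toEmbedding, fun a ha b hb ↦ by
    rw [map_subset_map, hf a ha b hb]⟩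

lemma IsDivEmbedding.divDim2_le {f : ℕ → Finset β} (hf : IsDivEmbedding S f) :
    divDim2 S ≤ Fintype.card β :=
  Nat.sInf_le hf.exists_fin

lemma exists_isDivEmbedding_divDim2 (hS : S.Finite) :
    ∃ f : ℕ → Finset (Fin (divDim2 S)), IsDivEmbedding S f := by
  classical
  have := hS.fintype
  have hdivisors : IsDivEmbedding S fun a ↦ ({y | y.1 ∣ a} : Finset S) := fun a ha b _ ↦ by
    simp only [subset_iff, mem_filter_univ]
    exact ⟨fun h ↦ h (x := ⟨a, ha⟩) dvd_rfl, fun hab y hya ↦ hya.trans hab⟩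
  exact Nat.sInf_mem (s := {d | ∃ f : ℕ → Finset (Fin d), IsDivEmbedding S f})
    ⟨_, hdivisors.exists_fin⟩

lemma divDim2_le_card_of_separating (G : β → Set ℕ)
    (hG : ∀ a ∈ S, ∀ b ∈ S, ∀ q, IsPrimePow q → q ∣ a → ¬ q ∣ b →
      ∃ i, q ∈ G i ∧ ∀ y ∈ G i, ¬ y ∣ b) :
    divDim2 S ≤ Fintype.card β := by
  classical
  suffices h : IsDivEmbedding S fun a ↦ ({i | ∃ y ∈ G i, y ∣ a} : Finset β) from h.divDim2_le
  intro a ha b hb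
  simp only [subset_iff, mem_filter_univ]
  refine ⟨fun hsub ↦ ?_, fun hab i ⟨y, hy, hya⟩ ↦ ⟨y, hy, hya.trans hab⟩⟩
  by_contra hab
  obtain ⟨p, k, hp, hpa, hpb⟩ : ∃ p k, p.Prime ∧ p ^ k ∣ a ∧ ¬ p ^ k ∣ b := by
    simpa [Nat.dvd_iff_prime_pow_dvd_dvd b a] using hab
  have hk : k ≠ 0 := by rintro rfl; simp at hpb
  obtain ⟨i, hpi, hib⟩ := hG a ha b hb _ (hp.isPrimePow.pow hk) hpa hpb
  obtain ⟨y, hy, hyb⟩ := hsub ⟨p ^ k, hpi, hpa⟩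
  exact hib y hy hyb

end Embeddings

section UpperBound

open ArithmeticFunction in
lemma pow_card_le_of_primePow_dvd {P b : ℕ} {B : Finset ℕ} (hP : 0 < P) (hb : b ≠ 0)
    (hB : ∀ q ∈ B, IsPrimePow q ∧ P ≤ q.minFac ∧ q ∣ b) : P ^ #B ≤ b := by
  have hlog : Real.log ((P ^ #B : ℕ) : ℝ) ≤ Real.log b := by
    calc Real.log ((P ^ #B : ℕ) : ℝ) = ∑ _q ∈ B, Real.log P := by simp
      _ ≤ ∑ q ∈ B, vonMangoldt q := by
        refine sum_le_sum fun q hq ↦ ?_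
        rw [vonMangoldt_apply, if_pos (hB q hq).1]
        gcongr
        exact (hB q hq).2.1
      _ ≤ ∑ q ∈ b.divisors, vonMangoldt q :=
        sum_le_sum_of_subset_of_nonneg (fun q hq ↦ Nat.mem_divisors.2 ⟨(hB q hq).2.2, hb⟩)
          fun _ _ _ ↦ vonMangoldt_nonneg
      _ = Real.log b := vonMangoldt_sum
  exact_mod_cast (Real.log_le_log_iff (by positivity) (by positivity)).1 hlog

/-- The prime powers up to `n` whose prime is at least `P`: the objects to be coloured for the upper
bound on `divDim2`. -/
def largePrimePowers (n P : ℕ) : Finset ℕ := {q ∈ Icc 1 n | IsPrimePow q ∧ P ≤ q.minFac}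

lemma exists_colorings_largePrimePowers (n : ℕ) {P : ℕ} (hP : 1 < P) :
    ∃ c : Fin (2 * (Nat.log 2 n + 1)) → largePrimePowers n P → Fin (2 * Nat.log P n + 1),
      ∀ x : largePrimePowers n P, ∀ b ∈ Icc 1 n, ¬ x.1 ∣ b →
        ∃ i, ∀ y : largePrimePowers n P, y.1 ∣ b → c i y ≠ c i x := by
  let X : Finset (largePrimePowers n P × ℕ) := {z ∈ univ ×ˢ Icc 1 n | ¬ z.1.1 ∣ z.2}
  let B (z : largePrimePowers n P × ℕ) : Finset (largePrimePowers n P) := {y | y.1 ∣ z.2}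
  have hXB : ∀ z ∈ X, z.1 ∉ B z := fun z hz ↦ by simpa [B] using (mem_filter.1 hz).2
  have hBcard : ∀ z ∈ X, #(B z) ≤ Nat.log P n := fun z hz ↦ by
    obtain ⟨hz1, hzn⟩ := mem_Icc.1 (mem_product.1 (mem_filter.1 hz).1).2
    refine Nat.le_log_of_pow_le hP (le_trans ?_ hzn)
    rw [← card_map (Function.Embedding.subtype _)]
    refine pow_card_le_of_primePow_dvd (by lia) (by lia) ?_
    refine forall_mem_map.2 fun y hy ↦ ?_
    obtain ⟨-, hprimePow, hlarge⟩ := mem_filter.1 y.2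
    exact ⟨hprimePow, hlarge, by simpa [B] using hy⟩
  have hXcard : #X < 2 ^ (2 * (Nat.log 2 n + 1)) := by
    have hlarge : #(largePrimePowers n P) ≤ n := (card_filter_le _ _).trans_eq (by simp)
    have hX : #X ≤ #(largePrimePowers n P) * n := (card_filter_le _ _).trans_eq (by simp)
    have hn : n < 2 ^ (Nat.log 2 n + 1) := Nat.lt_pow_succ_log_self one_lt_two n
    rw [mul_comm, pow_mul]
    nlinarith
  obtain ⟨c, hc⟩ := exists_colorings_separating hXB hBcard hXcard
  refine ⟨c, fun x b hb hxb ↦ ?_⟩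
  simpa [B] using hc (x, b) (mem_filter.2 ⟨mem_product.2 ⟨mem_univ x, hb⟩, hxb⟩)

theorem divDim2_le_mul_log {S : Set ℕ} {n P : ℕ} (hS : S ⊆ Set.Icc 1 n) (hP : 1 < P) :
    divDim2 S ≤ (4 * Nat.log P n + P + 2) * (Nat.log 2 n + 1) := by
  obtain ⟨c, hc⟩ := exists_colorings_largePrimePowers n hP
  let colorClass : Fin (2 * (Nat.log 2 n + 1)) × Fin (2 * Nat.log P n + 1) → Set ℕ :=
    fun z ↦ {q | ∃ h : q ∈ largePrimePowers n P, c z.1 ⟨q, h⟩ = z.2}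
  let smallPower : Fin P × Fin (Nat.log 2 n + 1) → Set ℕ := fun z ↦ {(z.1 : ℕ) ^ (z.2 : ℕ)}
  refine (divDim2_le_card_of_separating (Sum.elim colorClass smallPower) ?_).trans_eq ?_
  · intro a ha b hb q hq hqa hqb
    have hqn : q ≤ n := (Nat.le_of_dvd (hS ha).1 hqa).trans (hS ha).2
    by_cases hlarge : P ≤ q.minFac
    · have hqmem : q ∈ largePrimePowers n P := mem_filter.2 ⟨mem_Icc.2 ⟨hq.pos, hqn⟩, hq, hlarge⟩
      obtain ⟨i, hi⟩ := hc ⟨q, hqmem⟩ b (by simpa using hS hb) hqb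
      refine ⟨.inl (i, c i ⟨q, hqmem⟩), ⟨hqmem, rfl⟩, ?_⟩
      rintro y ⟨hymem, hy⟩ hyb
      exact hi ⟨y, hymem⟩ hyb hy
    · obtain ⟨p, k, hp, hk, rfl⟩ := (isPrimePow_nat_iff q).1 hq
      rw [hp.pow_minFac hk.ne', not_le] at hlarge
      have hklog : k ≤ Nat.log 2 n :=
        Nat.le_log_of_pow_le one_lt_two ((Nat.pow_le_pow_left hp.two_le k).trans hqn)
      refine ⟨.inr (⟨p, hlarge⟩, ⟨k, Nat.lt_succ_of_le hklog⟩), rfl, ?_⟩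
      rintro y rfl
      exact hqb
  · simp only [Fintype.card_sum, Fintype.card_prod, Fintype.card_fin]
    ring

end UpperBound

section LowerBound

variable {S : Set ℕ} {M k x : ℕ}

lemma IsDivEmbedding.isCoverFree_primesLE {β : Type*} [DecidableEq β] {f : ℕ → Finset β}
    (hf : IsDivEmbedding S f) (hM : M ≠ 0) (hk : k ≠ 0)
    (hmem : ∀ m, 1 ≤ m → m ≤ x ^ k → M * m ∈ S) :
    IsCoverFree (fun p ↦ f (M * p)) (Nat.primesLE x) k := by
  intro p hp B hB hBk hpB hsub
  have hprime : ∀ q ∈ Nat.primesLE x, q.Prime := fun q ↦ Nat.prime_of_mem_primesLE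
  have hle : ∀ q ∈ Nat.primesLE x, q ≤ x := fun q ↦ Nat.le_of_mem_primesLE
  have hmemPrime : ∀ q ∈ Nat.primesLE x, M * q ∈ S := fun q hq ↦
    hmem q (hprime q hq).one_lt.le ((hle q hq).trans (Nat.le_self_pow hk x))
  have hmemProd : M * ∏ q ∈ B, q ∈ S := by
    refine hmem _ (prod_pos fun q hq ↦ (hprime q (hB hq)).pos) ?_
    calc ∏ q ∈ B, q ≤ x ^ #B := prod_le_pow_card _ _ _ fun q hq ↦ hle q (hB hq)
      _ ≤ x ^ k := Nat.pow_le_pow_right ((hprime p hp).pos.trans_le (hle p hp)) hBk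
  have hsubProd : f (M * p) ⊆ f (M * ∏ q ∈ B, q) :=
    hsub.trans (biUnion_subset.2 fun q hq ↦ (hf _ (hmemPrime q (hB hq)) _ hmemProd).2
      (Nat.mul_dvd_mul_left M (dvd_prod_of_mem _ hq)))
  have hdvd : p ∣ ∏ q ∈ B, q := Nat.dvd_of_mul_dvd_mul_left (Nat.pos_of_ne_zero hM)
    ((hf _ (hmemPrime p hp) _ hmemProd).1 hsubProd)
  obtain ⟨q, hq, hpq⟩ := ((hprime p hp).prime.dvd_finsetProd_iff _).1 hdvd
  rw [(Nat.prime_dvd_prime_iff_eq (hprime p hp) (hprime q (hB hq))).1 hpq] at hpB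
  exact hpB hq

theorem primeCounting_le_divDim2_add_or (hS : S.Finite) (hM : M ≠ 0) (hk : k ≠ 0)
    (hmem : ∀ m, 1 ≤ m → m ≤ x ^ k → M * m ∈ S) :
    Nat.primeCounting x ≤ divDim2 S + k ∨ (k + 1) * (k + 2) ≤ 2 * divDim2 S := by
  obtain ⟨f, hf⟩ := exists_isDivEmbedding_divDim2 hS
  simpa using (hf.isCoverFree_primesLE hM hk hmem).card_le_add_or_succ_mul_le

theorem primeCounting_le_divDim2_Ioc_rpow_add_or {α : ℝ} {n : ℕ} (hα : 0 ≤ α) (hn : n ≠ 0)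
    (hk : k ≠ 0) (hxn : 2 * (n : ℝ) ^ α * (x : ℝ) ^ k ≤ n) :
    Nat.primeCounting x ≤ divDim2 {m : ℕ | (n : ℝ) ^ α < (m : ℝ) ∧ m ≤ n} + k ∨
      (k + 1) * (k + 2) ≤ 2 * divDim2 {m : ℕ | (n : ℝ) ^ α < (m : ℝ) ∧ m ≤ n} := by
  have hrpow : 1 ≤ (n : ℝ) ^ α :=
    Real.one_le_rpow (by exact_mod_cast Nat.one_le_iff_ne_zero.2 hn) hα
  have hfloor : (⌊(n : ℝ) ^ α⌋₊ : ℝ) ≤ (n : ℝ) ^ α := Nat.floor_le (by positivity)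
  refine primeCounting_le_divDim2_add_or (M := ⌊(n : ℝ) ^ α⌋₊ + 1)
    ((Set.finite_Iic n).subset fun m hm ↦ hm.2) (Nat.succ_ne_zero _) hk fun m hm hmx ↦ ⟨?_, ?_⟩
  · calc (n : ℝ) ^ α < ⌊(n : ℝ) ^ α⌋₊ + 1 := Nat.lt_floor_add_one _
      _ ≤ ((⌊(n : ℝ) ^ α⌋₊ + 1) * m : ℕ) := by exact_mod_cast Nat.le_mul_of_pos_right _ hm
  · have hmx' : (m : ℝ) ≤ (x : ℝ) ^ k := by exact_mod_cast hmx
    have : (((⌊(n : ℝ) ^ α⌋₊ + 1) * m : ℕ) : ℝ) ≤ n := by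
      calc (((⌊(n : ℝ) ^ α⌋₊ + 1) * m : ℕ) : ℝ) = (⌊(n : ℝ) ^ α⌋₊ + 1) * m := by push_cast; rfl
        _ ≤ 2 * (n : ℝ) ^ α * (x : ℝ) ^ k := by gcongr; linarith
        _ ≤ n := hxn
    exact_mod_cast this

end LowerBound

section Asymptotics

open Real

lemma tendsto_log_natCast_atTop : Tendsto (fun n : ℕ ↦ log (n : ℝ)) atTop atTop :=
  tendsto_log_atTop.comp tendsto_natCast_atTop_atTop

lemma eventually_log_le_const_mul {δ : ℝ} (hδ : 0 < δ) : ∀ᶠ t : ℝ in atTop, log t ≤ δ * t := by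
  filter_upwards [isLittleO_log_id_atTop.bound hδ, eventually_ge_atTop 0] with t ht ht0
  simpa [abs_of_nonneg ht0] using (le_abs_self _).trans ht

lemma eventually_div_log_add_rpow_mul_le {θ C : ℝ} (hθ0 : 0 < θ) (hθ1 : θ < 1)
    (hC : 4 / log 2 < C * θ) :
    ∀ᶠ t : ℝ in atTop, (4 * (t / (θ * log t)) + (t ^ θ + 1) + 2) * (t / log 2 + 1) ≤
      C * t ^ 2 / log t := by
  have hlog : Tendsto (fun t : ℝ ↦ log t / t) atTop (𝓝 0) :=
    isLittleO_log_id_atTop.tendsto_div_nhds_zero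
  have hpow : Tendsto (fun t : ℝ ↦ log t / t ^ (1 - θ)) atTop (𝓝 0) :=
    (isLittleO_log_rpow_atTop (sub_pos.2 hθ1)).tendsto_div_nhds_zero
  have hratio : Tendsto (fun t : ℝ ↦ (4 / θ + log t / t ^ (1 - θ) + 3 * (log t / t)) *
      (1 / log 2 + 1 / t)) atTop (𝓝 ((4 / θ + 0 + 3 * 0) * (1 / log 2 + 0))) :=
    ((hpow.const_add _).add (hlog.const_mul 3)).mul
      ((tendsto_const_nhds.div_atTop tendsto_id).const_add _)
  have hlim : (4 / θ + 0 + 3 * 0) * (1 / log 2 + 0) < C := by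
    rw [← div_lt_iff₀ hθ0] at hC
    rwa [add_zero, mul_zero, add_zero, add_zero, mul_one_div, div_right_comm]
  filter_upwards [hratio.eventually_lt_const hlim, eventually_gt_atTop 1] with t ht ht1
  have ht0 : 0 < t := one_pos.trans ht1
  have hlogt : 0 < log t := log_pos ht1
  calc (4 * (t / (θ * log t)) + (t ^ θ + 1) + 2) * (t / log 2 + 1)
      = (4 / θ + log t / t ^ (1 - θ) + 3 * (log t / t)) * (1 / log 2 + 1 / t) *
          (t ^ 2 / log t) := by
        rw [rpow_sub ht0, rpow_one]
        field
    _ ≤ C * (t ^ 2 / log t) := by gcongr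
    _ = C * t ^ 2 / log t := (mul_div_assoc _ _ _).symm

theorem eventually_divDim2_le {C : ℝ} (hC : 4 / log 2 < C) :
    ∀ᶠ n : ℕ in atTop, ∀ S ⊆ Set.Icc 1 n, (divDim2 S : ℝ) ≤ C * log n ^ 2 / log (log n) := by
  have : 0 < log 2 := log_pos one_lt_two
  have hC0 : 0 < C := (by positivity : 0 < 4 / log 2).trans hC
  obtain ⟨θ, hθ, hθ1⟩ : ∃ θ, 4 / log 2 / C < θ ∧ θ < 1 :=
    exists_between (by rwa [div_lt_one hC0])
  have hθ0 : 0 < θ := (by positivity : 0 < 4 / log 2 / C).trans hθ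
  have hC' : 4 / log 2 < C * θ := by rwa [div_lt_iff₀' hC0] at hθ
  filter_upwards [tendsto_log_natCast_atTop.eventually
      (eventually_div_log_add_rpow_mul_le hθ0 hθ1 hC'),
    tendsto_log_natCast_atTop.eventually_gt_atTop 1] with n hratio ht S hS
  set t := log n
  have hlogt : 0 < log t := log_pos ht
  have hP : t ^ θ ≤ ⌈t ^ θ⌉₊ := Nat.le_ceil _
  have hP1 : 1 < t ^ θ := one_lt_rpow ht hθ0
  have hlogP : θ * log t ≤ log (⌈t ^ θ⌉₊ : ℝ) := by
    rw [← log_rpow (by positivity)]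
    exact log_le_log (by positivity) hP
  have hcore : (divDim2 S : ℝ) ≤
      (4 * Nat.log ⌈t ^ θ⌉₊ n + ⌈t ^ θ⌉₊ + 2) * (Nat.log 2 n + 1) := by
    exact_mod_cast divDim2_le_mul_log hS (by exact_mod_cast hP1.trans_le hP)
  calc (divDim2 S : ℝ)
      ≤ (4 * Nat.log ⌈t ^ θ⌉₊ n + ⌈t ^ θ⌉₊ + 2) * (Nat.log 2 n + 1) := hcore
    _ ≤ (4 * (t / (θ * log t)) + (t ^ θ + 1) + 2) * (t / log 2 + 1) := by
        gcongr
        · exact (natLog_le_logb n _).trans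
            (div_le_div_of_nonneg_left (by positivity) (by positivity) hlogP)
        · exact (Nat.ceil_lt_add_one (by positivity)).le
        · exact natLog_le_logb n 2
    _ ≤ C * t ^ 2 / log t := hratio

lemma eventually_half_div_log_le_primeCounting :
    ∀ᶠ x : ℝ in atTop, x / 2 / log x ≤ Nat.primeCounting ⌊x⌋₊ := by
  have hlog : ∀ᶠ x : ℝ in atTop, log x ≤ 1 / 20 * x := eventually_log_le_const_mul (by norm_num)
  filter_upwards [(tendsto_atTop_add_const_right atTop 2 tendsto_id).eventually hlog,
    eventually_ge_atTop 20] with x hx hx20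
  refine le_trans ?_ (Chebyshev.pi_ge' (by linarith))
  gcongr
  · exact log_nonneg (by linarith)
  · have := log_two_gt_d9
    simp only [id] at hx
    nlinarith

lemma two_mul_rpow_mul_floor_pow_le {α u : ℝ} {n : ℕ} (hn : 1 < log n) (hu0 : 0 ≤ u)
    (hu : u * (2 * log (log n)) ≤ (1 - α) * log n - log 2) :
    2 * (n : ℝ) ^ α * (⌊log n ^ 2⌋₊ : ℝ) ^ ⌊u⌋₊ ≤ n := by
  set t := log n with ht
  have hn0 : n ≠ 0 := by rintro rfl; norm_num [ht] at hn
  have ht0 : 0 < t := one_pos.trans hn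
  have hloglog : 0 < log t := log_pos hn
  have hpow : (⌊t ^ 2⌋₊ : ℝ) ^ ⌊u⌋₊ ≤ exp ((1 - α) * t - log 2) := by
    calc (⌊t ^ 2⌋₊ : ℝ) ^ ⌊u⌋₊ ≤ (t ^ 2) ^ ⌊u⌋₊ := by
          gcongr
          exact Nat.floor_le (by positivity)
      _ = exp (⌊u⌋₊ * (2 * log t)) := by
          rw [exp_nat_mul, two_mul, exp_add, exp_log ht0, sq]
      _ ≤ exp ((1 - α) * t - log 2) := by
          refine exp_le_exp.2 (le_trans ?_ hu)
          gcongr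
          exact Nat.floor_le hu0
  calc 2 * (n : ℝ) ^ α * (⌊t ^ 2⌋₊ : ℝ) ^ ⌊u⌋₊
      ≤ 2 * (n : ℝ) ^ α * exp ((1 - α) * t - log 2) := by gcongr
    _ = exp (log 2 + t * α + ((1 - α) * t - log 2)) := by
        rw [exp_add, exp_add, exp_log two_pos, rpow_def_of_pos (by positivity)]
    _ = n := by
        rw [show log 2 + t * α + ((1 - α) * t - log 2) = t by ring, ht,
          exp_log (by positivity)]

theorem min_le_divDim2_Ioc_rpow {α u : ℝ} {n : ℕ} (hα : 0 ≤ α) (hn : 1 < log n) (hu1 : 1 ≤ u)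
    (hu : u * (2 * log (log n)) ≤ (1 - α) * log n - log 2) :
    min (Nat.primeCounting ⌊log n ^ 2⌋₊ - u) (u ^ 2 / 2) ≤
      divDim2 {m : ℕ | (n : ℝ) ^ α < (m : ℝ) ∧ m ≤ n} := by
  have hn0 : n ≠ 0 := by rintro rfl; norm_num at hn
  have hk : (⌊u⌋₊ : ℝ) ≤ u := Nat.floor_le (by linarith)
  rcases primeCounting_le_divDim2_Ioc_rpow_add_or hα hn0 (Nat.floor_pos.2 hu1).ne'
    (two_mul_rpow_mul_floor_pow_le hn (by linarith) hu) with h | h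
  · refine min_le_of_left_le ?_
    have : (Nat.primeCounting ⌊log n ^ 2⌋₊ : ℝ) ≤
        divDim2 {m : ℕ | (n : ℝ) ^ α < (m : ℝ) ∧ m ≤ n} + ⌊u⌋₊ := by exact_mod_cast h
    linarith
  · refine min_le_of_right_le ?_
    have : ((⌊u⌋₊ : ℝ) + 1) * (⌊u⌋₊ + 2) ≤
        2 * divDim2 {m : ℕ | (n : ℝ) ^ α < (m : ℝ) ∧ m ≤ n} := by exact_mod_cast h
    have hlt : u < ⌊u⌋₊ + 1 := Nat.lt_floor_add_one u
    nlinarith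

lemma eventually_one_le_linear_div_log {δ : ℝ} (hδ : 0 < δ) :
    ∀ᶠ t : ℝ in atTop, 1 ≤ (δ * t - log 2) / (2 * log t) := by
  filter_upwards [eventually_log_le_const_mul (show 0 < δ / 4 by positivity),
    eventually_ge_atTop (2 * log 2 / δ), eventually_gt_atTop 1] with t ht hlarge ht1
  have hlogt : 0 < log t := log_pos ht1
  rw [div_le_iff₀ hδ] at hlarge
  rw [one_le_div (by positivity)]
  linarith

lemma eventually_mul_sq_div_log_sq_le {δ c : ℝ} (hc : c < δ ^ 2 / 8) :
    ∀ᶠ t : ℝ in atTop,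
      c * t ^ 2 / log t ^ 2 ≤ ((δ * t - log 2) / (2 * log t)) ^ 2 / 2 := by
  have hlim : Tendsto (fun t : ℝ ↦ (δ - log 2 / t) ^ 2 / 8) atTop (𝓝 (δ ^ 2 / 8)) := by
    simpa using (((tendsto_const_nhds.div_atTop tendsto_id).const_sub δ).pow 2).div_const 8
  filter_upwards [hlim.eventually_const_lt hc, eventually_gt_atTop 1] with t ht ht1
  have hlogt : 0 < log t := log_pos ht1
  calc c * t ^ 2 / log t ^ 2 ≤ (δ - log 2 / t) ^ 2 / 8 * t ^ 2 / log t ^ 2 := by gcongr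
    _ = ((δ * t - log 2) / (2 * log t)) ^ 2 / 2 := by
        field_simp
        ring

lemma eventually_mul_sq_div_log_sq_le_primeCounting_sub {δ c : ℝ} (hδ : δ ≤ 1)
    (hc : c ≤ 1 / 8) :
    ∀ᶠ t : ℝ in atTop, c * t ^ 2 / log t ^ 2 ≤
      Nat.primeCounting ⌊t ^ 2⌋₊ - (δ * t - log 2) / (2 * log t) := by
  filter_upwards [(tendsto_pow_atTop two_ne_zero).eventually
      eventually_half_div_log_le_primeCounting,
    eventually_ge_atTop 4, tendsto_log_atTop.eventually_ge_atTop 1] with t hprimes ht hlogt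
  have hlinear : (δ * t - log 2) / (2 * log t) ≤ t ^ 2 / 8 / log t := by
    rw [div_le_div_iff₀ (by positivity) (by positivity)]
    have := log_pos one_lt_two
    have : δ * t - log 2 ≤ t ^ 2 / 8 * 2 := by nlinarith
    nlinarith
  have hmain : c * t ^ 2 / log t ^ 2 ≤ t ^ 2 / 8 / log t := by
    rw [div_le_div_iff₀ (by positivity) (by positivity)]
    calc c * t ^ 2 * log t ≤ 1 / 8 * t ^ 2 * log t := by gcongr
      _ = t ^ 2 / 8 * log t := by ring
      _ ≤ t ^ 2 / 8 * log t ^ 2 := by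
        gcongr
        exact le_self_pow₀ hlogt two_ne_zero
  have hsum : t ^ 2 / 2 / log (t ^ 2) = t ^ 2 / 8 / log t + t ^ 2 / 8 / log t := by
    rw [log_pow]
    push_cast
    field
  linarith

/- The exponent `u = ((1 - α) log n - log 2) / (2 log (log n))` is the largest one with
`2 * n ^ α * (log n) ^ (2 * u) ≤ n`. -/
theorem eventually_le_divDim2_Ioc_rpow {α c : ℝ} (hα0 : 0 ≤ α) (hα1 : α < 1)
    (hc : c < (1 - α) ^ 2 / 8) :
    ∀ᶠ n : ℕ in atTop, c * log n ^ 2 / log (log n) ^ 2 ≤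
      divDim2 {m : ℕ | (n : ℝ) ^ α < (m : ℝ) ∧ m ≤ n} := by
  have hδ : 0 < 1 - α := sub_pos.2 hα1
  have hc8 : c ≤ 1 / 8 := by nlinarith
  have hlog := tendsto_log_natCast_atTop
  filter_upwards [hlog.eventually_gt_atTop 1,
    hlog.eventually (eventually_one_le_linear_div_log hδ),
    hlog.eventually (eventually_mul_sq_div_log_sq_le hc),
    hlog.eventually (eventually_mul_sq_div_log_sq_le_primeCounting_sub (sub_le_self 1 hα0) hc8)]
    with n hn hu1 hsq hprimes
  have hloglog : 0 < log (log n) := log_pos hn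
  exact (le_min hprimes hsq).trans
    (min_le_divDim2_Ioc_rpow hα0 hn hu1 (div_mul_cancel₀ _ (by positivity)).le)

end Asymptotics

theorem divDim2_Ioc_rpow_bounds_general {α c C : ℝ} (hα0 : 0 ≤ α) (hα1 : α < 1)
    (hc : c < (1 - α) ^ 2 / 8) (hC : 4 / Real.log 2 < C) :
    ∀ᶠ n : ℕ in atTop,
      c * Real.log n ^ 2 / Real.log (Real.log n) ^ 2 ≤
          divDim2 {m : ℕ | (n : ℝ) ^ α < (m : ℝ) ∧ m ≤ n} ∧
        (divDim2 {m : ℕ | (n : ℝ) ^ α < (m : ℝ) ∧ m ≤ n} : ℝ) ≤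
          C * Real.log n ^ 2 / Real.log (Real.log n) := by
  filter_upwards [eventually_le_divDim2_Ioc_rpow hα0 hα1 hc, eventually_divDim2_le hC]
    with n hlower hupper
  refine ⟨hlower, hupper _ fun m hm ↦ ⟨?_, hm.2⟩⟩
  exact_mod_cast (Real.rpow_nonneg n.cast_nonneg α).trans_lt hm.1

/-- For fixed `α ∈ (0,1)`, for every `ε > 0` and all large `n`,
`((1-α)²/16 - ε) (log n)²/(log log n)² ≤ dim₂(D_{(n^α, n]})
  ≤ ((4/3) e π² + ε) (log n)²/log log n`. -/
theorem divDim2_Ioc_rpow_bounds (α : ℝ) (hα0 : 0 < α) (hα1 : α < 1) :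
    ∀ ε : ℝ, 0 < ε → ∃ N : ℕ, ∀ n : ℕ, N ≤ n →
      ((1 - α) ^ 2 / 16 - ε) * (Real.log n) ^ 2 / (Real.log (Real.log n)) ^ 2
          ≤ (divDim2 {m : ℕ | (n : ℝ) ^ α < (m : ℝ) ∧ m ≤ n} : ℝ) ∧
        (divDim2 {m : ℕ | (n : ℝ) ^ α < (m : ℝ) ∧ m ≤ n} : ℝ)
          ≤ ((4 / 3) * Real.exp 1 * Real.pi ^ 2 + ε) * (Real.log n) ^ 2
              / Real.log (Real.log n) := by
  intro ε hε
  have hlower : (1 - α) ^ 2 / 16 - ε < (1 - α) ^ 2 / 8 := by nlinarith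
  have hupper : 4 / Real.log 2 < 4 / 3 * Real.exp 1 * Real.pi ^ 2 + ε := by
    have hlog : 4 / Real.log 2 < 8 := by
      rw [div_lt_iff₀ (Real.log_pos one_lt_two)]
      linarith [Real.log_two_gt_d9]
    have hpi : 9 < Real.pi ^ 2 := by nlinarith [Real.pi_gt_three]
    nlinarith [Real.exp_one_gt_d9]
  exact eventually_atTop.1 (divDim2_Ioc_rpow_bounds_general hα0.le hα1 hlower hupper)
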